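/- A finite connected simple graph (with at least one edge) is bipartite if and only if 2 is an eigenvalue of its normalized Laplacian. -/

import Mathlib

open SimpleGraph

def Bipartite {V : Type*} (G : SimpleGraph V) : Prop :=
  ∃ s : V → Bool, ∀ u v : V, G.Adj u v → s u ≠ s v

noncomputable def normLaplacian {V : Type*} [Fintype V] [DecidableEq V]
    (G : SimpleGraph V) [DecidableRel G.Adj] : Matrix V V ℝ :=
  1 - Matrix.of fun u v : V =>
    if G.Adj u v then 1 / (Real.sqrt (G.degree u) * Real.sqrt (G.degree v)) else 0

/-- The eigenvalue equation, in the coordinates `x = D^{1/2} y`. -/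
lemma eig_iff {V : Type*} [Fintype V] [DecidableEq V] (G : SimpleGraph V)
    [DecidableRel G.Adj] (hd : ∀ u, 0 < Real.sqrt (G.degree u)) (y : V → ℝ) :
    (normLaplacian G).mulVec (fun u => Real.sqrt (G.degree u) * y u)
        = (2 : ℝ) • (fun u => Real.sqrt (G.degree u) * y u) ↔
      ∀ u, ∑ v ∈ G.neighborFinset u, (y u + y v) = 0 := by
  rw [funext_iff]
  refine forall_congr' fun u => ?_
  have h1 : (Matrix.of fun u v : V =>
      if G.Adj u v then 1 / (Real.sqrt (G.degree u) * Real.sqrt (G.degree v)) else 0).mulVec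
      (fun u => Real.sqrt (G.degree u) * y u) u
      = (∑ v ∈ G.neighborFinset u, y v) / Real.sqrt (G.degree u) := by
    rw [Finset.sum_div, G.neighborFinset_eq_filter, Finset.sum_filter]
    simp only [Matrix.mulVec, dotProduct, Matrix.of_apply]
    refine Finset.sum_congr rfl fun v _ => ?_
    have := (hd v).ne'
    have := (hd u).ne'
    split_ifs
    · field_simp
    · simp
  rw [normLaplacian, Matrix.sub_mulVec, Pi.sub_apply, h1, Matrix.one_mulVec, Finset.sum_add_distrib,
    Finset.sum_const, G.card_neighborFinset_eq_degree, nsmul_eq_mul, Pi.smul_apply, smul_eq_mul]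
  have hs : Real.sqrt (G.degree u) * Real.sqrt (G.degree u) = G.degree u :=
    Real.mul_self_sqrt (Nat.cast_nonneg _)
  have h0 := hd u
  generalize Real.sqrt (G.degree u) = r at *
  generalize ∑ v ∈ G.neighborFinset u, y v = S at *
  rw [← hs]
  have : S = r * (S / r) := by field_simp
  generalize S / r = T at *
  subst this
  constructor
  · intro h
    linear_combination (-r) * h
  · intro h
    have : r * (r * y u + T) = 0 := by linear_combination h
    rcases mul_eq_zero.1 this with h | h
    · exact absurd h h0.ne'
    · linear_combination -h

/-- A finite connected graph with at least one edge is bipartite iff `2` is an eigenvalue of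
its normalized Laplacian. -/
theorem stmt10 {V : Type*} [Fintype V] [DecidableEq V] (G : SimpleGraph V)
    [DecidableRel G.Adj] (hconn : G.Connected) (hedge : ∃ u v : V, G.Adj u v) :
    Bipartite G ↔
      ∃ x : V → ℝ, x ≠ 0 ∧ (normLaplacian G).mulVec x = (2 : ℝ) • x := by
  obtain ⟨a, b, hab⟩ := hedge
  have : Nontrivial V := ⟨a, b, hab.ne⟩
  have hd : ∀ u, 0 < Real.sqrt (G.degree u) := fun u =>
    Real.sqrt_pos.2 (Nat.cast_pos.2 (hconn.preconnected.degree_pos_of_nontrivial u))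
  constructor
  · rintro ⟨s, hs⟩
    refine ⟨fun u => Real.sqrt (G.degree u) * (if s u then 1 else -1), ?_, ?_⟩
    · intro h
      have h1 := congrFun h a
      have h2 := (hd a).ne'
      simp only [Pi.zero_apply, mul_eq_zero, h2, false_or] at h1
      split_ifs at h1 <;> norm_num at h1
    · rw [eig_iff G hd]
      intro u
      refine Finset.sum_eq_zero fun v hv => ?_
      have := hs u v (by simpa using hv)
      cases hu : s u <;> cases hv : s v <;> simp_all
  · rintro ⟨x, hx, he⟩
    obtain ⟨y, rfl⟩ : ∃ y : V → ℝ, x = fun u => Real.sqrt (G.degree u) * y u :=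
      ⟨fun u => x u / Real.sqrt (G.degree u), by
        funext u; have := (hd u).ne'; field_simp⟩
    rw [eig_iff G hd] at he
    obtain ⟨m, hm⟩ := Finite.exists_max fun u => |y u|
    have hm0 : 0 < |y m| := by
      rw [abs_pos]
      intro h0
      apply hx
      funext u
      have := hm u
      simp only [h0, abs_zero, abs_nonpos_iff] at this
      simp [this]
    have step : ∀ u, |y u| = |y m| → ∀ v, G.Adj u v → y v = - y u := by
      intro u hu v huv
      have hsum : ∑ v ∈ G.neighborFinset u, y u * (y u + y v) = 0 := by
        rw [← Finset.mul_sum, he u, mul_zero]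
      have hnn : ∀ v ∈ G.neighborFinset u, 0 ≤ y u * (y u + y v) := by
        intro v _
        have h1 : |y v| ≤ |y u| := hu ▸ hm v
        have h2 : |y u * y v| ≤ |y u| * |y u| := by rw [abs_mul]; gcongr
        have h3 := neg_abs_le (y u * y v)
        have h4 := abs_mul_abs_self (y u)
        linarith
      have := (Finset.sum_eq_zero_iff_of_nonneg hnn).1 hsum v (by simpa using huv)
      have hu0 : y u ≠ 0 := by rw [← abs_pos, hu]; exact hm0
      rcases mul_eq_zero.1 this with h | h
      · exact absurd h hu0
      · linarith
    have walk : ∀ u w, G.Walk u w → |y w| = |y m| → |y u| = |y m| := by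
      intro u w p hw
      induction p with
      | nil => exact hw
      | cons h p ih =>
        have hk := ih hw
        rw [step _ hk _ h.symm, abs_neg, hk]
    have all : ∀ u, |y u| = |y m| := by
      intro u
      obtain ⟨p⟩ := hconn.preconnected u m
      exact walk u m p rfl
    refine ⟨fun u => decide (0 < y u), fun u v huv heq => ?_⟩
    have h1 := step u (all u) v huv
    have hu0 : y u ≠ 0 := by rw [← abs_pos, all u]; exact hm0
    simp only [decide_eq_decide, h1] at heq
    rcases lt_or_gt_of_ne hu0 with h | h
    · have := heq.2 (by linarith)
      linarith
    · have := heq.1 h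
      linarith
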